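/- arXiv:1706.06928 — 3 statements merged into one kernel-verified Lean document; each statement's English description precedes it below -/
import Mathlib

section
/- For every N ≥ 1 and every m ≥ 1 there exists a positive real constant ℓ^m_N > 0 such that for all x ∈ ℝ^N∖{0}, |∇^m log|x|| = √(ℓ^m_N) / |x|^m, where log|x| denotes the function x ↦ log of the Euclidean norm of x. -/
/-!
The function `log ‖x‖` is invariant under linear isometries and changes by a constant under
dilations. Its `m`-th derivative (`m ≥ 1`) is therefore equivariant under isometries and homogeneous
of degree `-m`. The Frobenius norm of a multilinear map does not depend on the orthonormal basis
used to compute it, so that of the derivative at `x` depends only on `‖x‖` and is a multiple of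
`1 / ‖x‖ ^ m`. The multiple is nonzero since along a line through the origin the derivatives are
those of the one-variable logarithm.
-/

open MeasureTheory Metric Filter Matrix

noncomputable section

/-- The mixed partial derivative `∂^m u / ∂x_{i 0} ⋯ ∂x_{i (m-1)} (x)`, realized as the
iterated Fréchet derivative applied to the corresponding standard basis vectors. -/
def mixedPartial (N m : ℕ) (u : EuclideanSpace ℝ (Fin N) → ℝ)
    (i : Fin m → Fin N) (x : EuclideanSpace ℝ (Fin N)) : ℝ :=
  iteratedFDeriv ℝ m u x fun k => EuclideanSpace.single (i k) 1

/-- The Frobenius norm `|∇^m u (x)|` of the tensor of `m`-th order partial derivatives. -/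
def gradNorm (N m : ℕ) (u : EuclideanSpace ℝ (Fin N) → ℝ)
    (x : EuclideanSpace ℝ (Fin N)) : ℝ :=
  Real.sqrt (∑ i : Fin m → Fin N, mixedPartial N m u i x ^ 2)

/-- The function `x ↦ log |x|`. -/
def logNorm (N : ℕ) (x : EuclideanSpace ℝ (Fin N)) : ℝ := Real.log ‖x‖

/-- The constant `ℓ_N = ∑ (∂^N log|x|/∂x_{i_1}⋯∂x_{i_N} (e_1))²`. -/
def ell (N : ℕ) (hN : 0 < N) : ℝ :=
  ∑ i : Fin N → Fin N,
    mixedPartial N N (logNorm N) i (EuclideanSpace.single (⟨0, hN⟩ : Fin N) 1) ^ 2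

/-- `ω_{N-1}`, the surface measure of the unit sphere `𝕊^{N-1} ⊂ ℝ^N`,
expressed as `N` times the volume of the unit ball. -/
def omegaSphere (N : ℕ) : ℝ :=
  N * (volume (ball (0 : EuclideanSpace ℝ (Fin N)) 1)).toReal

theorem sum_norm_sq_multilinearMap_succ {𝕜 E F ι : Type*} [NontriviallyNormedField 𝕜]
    [NormedAddCommGroup E] [NormedSpace 𝕜 E] [NormedAddCommGroup F] [NormedSpace 𝕜 F] [Fintype ι]
    {m : ℕ} (T : E [×(m + 1)]→L[𝕜] F) (v : ι → E) :
    ∑ i : Fin (m + 1) → ι, ‖T fun k => v (i k)‖ ^ 2 =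
      ∑ j, ∑ i : Fin m → ι, ‖T.curryLeft (v j) fun k => v (i k)‖ ^ 2 := by
  rw [← (Fin.consEquiv fun _ => ι).sum_comp, Fintype.sum_prod_type]
  refine Finset.sum_congr rfl fun j _ => Finset.sum_congr rfl fun i _ => ?_
  rw [ContinuousMultilinearMap.curryLeft_apply]
  congr 3
  funext k
  cases k using Fin.cases <;> simp [Fin.consEquiv]

section Frobenius

variable {𝕜 E F ι κ : Type*} [RCLike 𝕜] [NormedAddCommGroup E] [InnerProductSpace 𝕜 E]
  [NormedAddCommGroup F] [InnerProductSpace 𝕜 F] [Fintype ι] [Fintype κ] {m : ℕ}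

theorem sum_norm_sq_linearMap_eq_adjoint [FiniteDimensional 𝕜 E] [FiniteDimensional 𝕜 F]
    (φ : E →ₗ[𝕜] F) (b : OrthonormalBasis ι 𝕜 E) (f : OrthonormalBasis κ 𝕜 F) :
    ∑ i, ‖φ (b i)‖ ^ 2 = ∑ j, ‖φ.adjoint (f j)‖ ^ 2 := by
  calc ∑ i, ‖φ (b i)‖ ^ 2
      = ∑ i, ∑ j, ‖inner 𝕜 (f j) (φ (b i))‖ ^ 2 := by simp only [f.sum_sq_norm_inner_right]
    _ = ∑ j, ∑ i, ‖inner 𝕜 (φ.adjoint (f j)) (b i)‖ ^ 2 := by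
        simp only [LinearMap.adjoint_inner_left]
        exact Finset.sum_comm
    _ = ∑ j, ‖φ.adjoint (f j)‖ ^ 2 := by simp only [b.sum_sq_norm_inner_left]

theorem sum_norm_sq_linearMap_orthonormalBasis_eq (φ : E →ₗ[𝕜] F)
    (b : OrthonormalBasis ι 𝕜 E) (c : OrthonormalBasis κ 𝕜 E) :
    ∑ i, ‖φ (b i)‖ ^ 2 = ∑ j, ‖φ (c j)‖ ^ 2 := by
  have : FiniteDimensional 𝕜 E := b.toBasis.finiteDimensional_of_finite
  let f := stdOrthonormalBasis 𝕜 φ.range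
  exact (sum_norm_sq_linearMap_eq_adjoint φ.rangeRestrict b f).trans
    (sum_norm_sq_linearMap_eq_adjoint φ.rangeRestrict c f).symm

theorem sum_norm_sq_multilinearMap_orthonormalBasis_eq (T : E [×m]→L[𝕜] F)
    (b : OrthonormalBasis ι 𝕜 E) (c : OrthonormalBasis κ 𝕜 E) :
    ∑ i : Fin m → ι, ‖T fun k => b (i k)‖ ^ 2 = ∑ j : Fin m → κ, ‖T fun k => c (j k)‖ ^ 2 := by
  induction m with
  | zero =>
    simp only [Fintype.sum_unique]
    congr 3
    exact Subsingleton.elim _ _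
  | succ m ih =>
    let evalTail (j : Fin m → κ) : E →ₗ[𝕜] F :=
      (ContinuousMultilinearMap.apply 𝕜 (fun _ => E) F fun k => c (j k)).toLinearMap ∘ₗ
        T.curryLeft.toLinearMap
    calc ∑ i : Fin (m + 1) → ι, ‖T fun k => b (i k)‖ ^ 2
        = ∑ i, ∑ j : Fin m → κ, ‖T.curryLeft (b i) fun k => c (j k)‖ ^ 2 := by
          simp only [sum_norm_sq_multilinearMap_succ, ih]
      _ = ∑ j : Fin m → κ, ∑ i, ‖evalTail j (b i)‖ ^ 2 := Finset.sum_comm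
      _ = ∑ j : Fin m → κ, ∑ i, ‖evalTail j (c i)‖ ^ 2 :=
          Finset.sum_congr rfl fun j _ =>
            sum_norm_sq_linearMap_orthonormalBasis_eq (evalTail j) b c
      _ = ∑ i, ∑ j : Fin m → κ, ‖T.curryLeft (c i) fun k => c (j k)‖ ^ 2 := Finset.sum_comm
      _ = ∑ j : Fin (m + 1) → κ, ‖T fun k => c (j k)‖ ^ 2 :=
          (sum_norm_sq_multilinearMap_succ T c).symm

variable [FiniteDimensional 𝕜 E]

/-- The Frobenius (Hilbert–Schmidt) norm of a multilinear map on a finite-dimensional inner product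
space, computed in the standard orthonormal basis; by `frobeniusNorm_eq_sqrt_sum` any other
orthonormal basis gives the same value. -/
def frobeniusNorm (T : E [×m]→L[𝕜] F) : ℝ :=
  √(∑ i : Fin m → Fin (Module.finrank 𝕜 E), ‖T fun k => stdOrthonormalBasis 𝕜 E (i k)‖ ^ 2)

theorem frobeniusNorm_eq_sqrt_sum (T : E [×m]→L[𝕜] F) (b : OrthonormalBasis ι 𝕜 E) :
    frobeniusNorm T = √(∑ i : Fin m → ι, ‖T fun k => b (i k)‖ ^ 2) := by
  rw [frobeniusNorm, sum_norm_sq_multilinearMap_orthonormalBasis_eq T _ b]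

theorem frobeniusNorm_comp_linearIsometryEquiv {G : Type*} [NormedAddCommGroup G]
    [InnerProductSpace 𝕜 G] [FiniteDimensional 𝕜 G] (T : E [×m]→L[𝕜] F) (R : G ≃ₗᵢ[𝕜] E) :
    frobeniusNorm (T.compContinuousLinearMap fun _ => (R : G →L[𝕜] E)) = frobeniusNorm T := by
  rw [frobeniusNorm, frobeniusNorm_eq_sqrt_sum T ((stdOrthonormalBasis 𝕜 G).map R)]
  simp

theorem frobeniusNorm_smul (a : 𝕜) (T : E [×m]→L[𝕜] F) :
    frobeniusNorm (a • T) = ‖a‖ * frobeniusNorm T := by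
  simp only [frobeniusNorm, _root_.smul_apply, norm_smul, mul_pow,
    ← Finset.mul_sum]
  rw [Real.sqrt_mul (by positivity), Real.sqrt_sq (norm_nonneg a)]

theorem frobeniusNorm_pos {T : E [×m]→L[𝕜] F} (hT : T ≠ 0) : 0 < frobeniusNorm T := by
  obtain ⟨i, hi⟩ : ∃ i : Fin m → Fin (Module.finrank 𝕜 E),
      T (fun k => stdOrthonormalBasis 𝕜 E (i k)) ≠ 0 := by
    contrapose! hT
    refine ContinuousMultilinearMap.toMultilinearMap_injective ?_
    exact Module.Basis.ext_multilinear (fun _ => (stdOrthonormalBasis 𝕜 E).toBasis)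
      fun i => by simpa using hT i
  exact Real.sqrt_pos.2 <|
    Finset.sum_pos' (fun _ _ => by positivity) ⟨i, Finset.mem_univ i, by positivity⟩

end Frobenius

theorem gradNorm_eq_frobeniusNorm {N : ℕ} (m : ℕ) (u : EuclideanSpace ℝ (Fin N) → ℝ)
    (x : EuclideanSpace ℝ (Fin N)) :
    gradNorm N m u x = frobeniusNorm (iteratedFDeriv ℝ m u x) := by
  simp [gradNorm, mixedPartial, frobeniusNorm_eq_sqrt_sum _ (EuclideanSpace.basisFun (Fin N) ℝ)]

theorem iteratedFDeriv_comp_continuousLinearMap {𝕜 E F G : Type*} [NontriviallyNormedField 𝕜]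
    [NormedAddCommGroup E] [NormedSpace 𝕜 E] [NormedAddCommGroup F] [NormedSpace 𝕜 F]
    [NormedAddCommGroup G] [NormedSpace 𝕜 G] {m : ℕ} {f : E → F} (g : G →L[𝕜] E) {x : G}
    (hf : ContDiffAt 𝕜 m f (g x)) :
    iteratedFDeriv 𝕜 m (fun y => f (g y)) x =
      (iteratedFDeriv 𝕜 m f (g x)).compContinuousLinearMap fun _ => g := by
  obtain ⟨s, hs, hxs, hfs⟩ : ∃ s, IsOpen s ∧ g x ∈ s ∧ ContDiffOn 𝕜 m f s := by
    obtain ⟨s, hs, hxs, hfs⟩ := hf.contDiffOn' le_rfl (by simp)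
    exact ⟨s, hs, hxs, by simpa using hfs⟩
  have hgs : IsOpen (g ⁻¹' s) := hs.preimage g.continuous
  rw [← iteratedFDerivWithin_of_isOpen m hgs hxs, ← iteratedFDerivWithin_of_isOpen m hs hxs]
  exact g.iteratedFDerivWithin_comp_right hfs hs.uniqueDiffOn hgs.uniqueDiffOn hxs le_rfl

theorem frobeniusNorm_iteratedFDeriv_radial_congr {E F : Type*} [NormedAddCommGroup E]
    [InnerProductSpace ℝ E] [FiniteDimensional ℝ E] [NormedAddCommGroup F] [InnerProductSpace ℝ F]
    {m : ℕ} {f : ℝ → F} {x y : E} (hf : ContDiffAt ℝ m (fun z : E => f ‖z‖) y)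
    (hxy : ‖x‖ = ‖y‖) :
    frobeniusNorm (iteratedFDeriv ℝ m (fun z : E => f ‖z‖) x) =
      frobeniusNorm (iteratedFDeriv ℝ m (fun z : E => f ‖z‖) y) := by
  let R : E ≃ₗᵢ[ℝ] E := (ℝ ∙ (x - y))ᗮ.reflection
  have hR : R x = y := Submodule.reflection_sub hxy
  have h := iteratedFDeriv_comp_continuousLinearMap (R : E →L[ℝ] E) (x := x)
    (by simpa [hR] using hf)
  simp only [ContinuousLinearEquiv.coe_coe, LinearIsometryEquiv.coe_coe, R.norm_map, hR] at h
  rw [h, frobeniusNorm_comp_linearIsometryEquiv]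

section LogNorm

variable {E : Type*} [NormedAddCommGroup E] [InnerProductSpace ℝ E] {m : ℕ}

theorem contDiffAt_log_norm {n : WithTop ℕ∞} {x : E} (hx : x ≠ 0) :
    ContDiffAt ℝ n (fun y : E => Real.log ‖y‖) x :=
  (contDiffAt_norm ℝ hx).log (norm_ne_zero_iff.2 hx)

theorem iteratedFDeriv_log_norm_eq_pow_smul (hm : m ≠ 0) {a : ℝ} (ha : a ≠ 0) {x : E}
    (hx : x ≠ 0) :
    iteratedFDeriv ℝ m (fun y : E => Real.log ‖y‖) x =
      a ^ m • iteratedFDeriv ℝ m (fun y : E => Real.log ‖y‖) (a • x) := by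
  have log_norm_smul : (fun y : E => Real.log ‖a • y‖) =ᶠ[nhds x]
      fun y => Real.log ‖a‖ + Real.log ‖y‖ := by
    filter_upwards [isOpen_ne.mem_nhds hx] with y hy
    rw [norm_smul, Real.log_mul (norm_ne_zero_iff.2 ha) (norm_ne_zero_iff.2 hy)]
  calc iteratedFDeriv ℝ m (fun y : E => Real.log ‖y‖) x
      = iteratedFDeriv ℝ m (fun y : E => Real.log ‖a • y‖) x := by
        rw [(log_norm_smul.iteratedFDeriv ℝ m).eq_of_nhds,
          fun_iteratedFDeriv_add_apply contDiffAt_const (contDiffAt_log_norm hx),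
          iteratedFDeriv_const_of_ne hm, Pi.zero_apply, zero_add]
    _ = (iteratedFDeriv ℝ m (fun y : E => Real.log ‖y‖) (a • x)).compContinuousLinearMap
          fun _ => a • ContinuousLinearMap.id ℝ E :=
        iteratedFDeriv_comp_continuousLinearMap (a • ContinuousLinearMap.id ℝ E)
          (contDiffAt_log_norm (smul_ne_zero ha hx))
    _ = a ^ m • iteratedFDeriv ℝ m (fun y : E => Real.log ‖y‖) (a • x) := by
        ext v
        simp [ContinuousMultilinearMap.map_smul_univ _ (fun _ => a)]

theorem iteratedDeriv_succ_real_log (k : ℕ) (t : ℝ) :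
    iteratedDeriv (k + 1) Real.log t = (-1) ^ k * k.factorial * t ^ (-1 - k : ℤ) := by
  rw [iteratedDeriv_succ', Real.deriv_log', iteratedDeriv_eq_iterate, iter_deriv_inv]

theorem iteratedFDeriv_log_norm_smul_apply {e : E} (he : ‖e‖ = 1) {t : ℝ} (ht : t ≠ 0) :
    iteratedFDeriv ℝ m (fun y : E => Real.log ‖y‖) (t • e) (fun _ => e) =
      iteratedDeriv m Real.log t := by
  have he₀ : e ≠ 0 := norm_ne_zero_iff.1 (he ▸ one_ne_zero)
  have h := iteratedFDeriv_comp_continuousLinearMap (ContinuousLinearMap.toSpanSingleton ℝ e)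
    (m := m) (f := fun y : E => Real.log ‖y‖) (contDiffAt_log_norm (smul_ne_zero ht he₀))
  simp only [ContinuousLinearMap.toSpanSingleton_apply, norm_smul, he, mul_one, Real.norm_eq_abs,
    Real.log_abs] at h
  simp [iteratedDeriv_eq_iteratedFDeriv, h]

theorem iteratedFDeriv_log_norm_ne_zero (hm : m ≠ 0) {x : E} (hx : x ≠ 0) :
    iteratedFDeriv ℝ m (fun y : E => Real.log ‖y‖) x ≠ 0 := by
  obtain ⟨k, rfl⟩ := Nat.exists_eq_succ_of_ne_zero hm
  have hx' : ‖x‖ ≠ 0 := norm_ne_zero_iff.2 hx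
  have hunit : ‖‖x‖⁻¹ • x‖ = 1 := norm_smul_inv_norm (𝕜 := ℝ) hx
  have radial := iteratedFDeriv_log_norm_smul_apply (m := k + 1) hunit hx'
  intro h
  rw [smul_inv_smul₀ hx', h, iteratedDeriv_succ_real_log] at radial
  have : (-1) ^ k * k.factorial * ‖x‖ ^ (-1 - k : ℤ) ≠ 0 := by positivity
  exact this radial.symm

theorem statement3_general [FiniteDimensional ℝ E] [Nontrivial E] (hm : m ≠ 0) :
    ∃ ℓ : ℝ, 0 < ℓ ∧ ∀ x : E, x ≠ 0 →
      frobeniusNorm (iteratedFDeriv ℝ m (fun y : E => Real.log ‖y‖) x) = √ℓ / ‖x‖ ^ m := by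
  obtain ⟨e, he⟩ := exists_norm_eq E zero_le_one
  have he₀ : e ≠ 0 := norm_ne_zero_iff.1 (he ▸ one_ne_zero)
  have hpos := frobeniusNorm_pos (iteratedFDeriv_log_norm_ne_zero hm he₀)
  refine ⟨_, pow_pos hpos 2, fun x hx => ?_⟩
  have hx' : ‖x‖ ≠ 0 := norm_ne_zero_iff.2 hx
  have hnorm : ‖x‖ = ‖‖x‖ • e‖ := by rw [norm_smul, norm_norm, he, mul_one]
  have hxe : ‖x‖ • e ≠ 0 := smul_ne_zero hx' he₀
  rw [Real.sqrt_sq hpos.le, eq_div_iff (pow_ne_zero m hx'),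
    frobeniusNorm_iteratedFDeriv_radial_congr (f := Real.log) (contDiffAt_log_norm hxe) hnorm,
    iteratedFDeriv_log_norm_eq_pow_smul hm hx' he₀, frobeniusNorm_smul, norm_pow, norm_norm,
    mul_comm]

end LogNorm

/-- there is a positive constant `ℓ^m_N` with
`|∇^m log|x|| = √(ℓ^m_N)/|x|^m` for all `x ≠ 0`. -/
theorem statement3 (N m : ℕ) (hN : 1 ≤ N) (hm : 1 ≤ m) :
    ∃ ℓ : ℝ, 0 < ℓ ∧ ∀ x : EuclideanSpace ℝ (Fin N), x ≠ 0 →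
      gradNorm N m (logNorm N) x = Real.sqrt ℓ / ‖x‖ ^ m := by
  have : Nonempty (Fin N) := ⟨⟨0, hN⟩⟩
  simpa only [gradNorm_eq_frobeniusNorm] using! statement3_general (Nat.one_le_iff_ne_zero.1 hm)
end
end

section
/- Let N ≥ 1, let u be a real-valued function of class C^{2N} on ℝ^N∖{0}, and let A be an orthogonal N×N matrix; set u_A(x) = u(Ax). Then for every x ∈ ℝ^N∖{0}, ∑_{(i_1,…,i_N)∈{1,…,N}^N} ∂^N/∂x_{i_1}⋯∂x_{i_N} ( |x|^N ∂^N u_A/∂x_{i_1}⋯∂x_{i_N} )(x) = [ ∑_{(i_1,…,i_N)∈{1,…,N}^N} ∂^N/∂y_{i_1}⋯∂y_{i_N} ( |y|^N ∂^N u/∂y_{i_1}⋯∂y_{i_N} ) ](Ax); i.e. the 2N-th order operator u ↦ ∑_{i_1,…,i_N} ∂^N(|x|^N ∂^N u) commutes with the action of O(N). -/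
/-!
Attach to an orthonormal basis `b` the operator `u ↦ ∑ᵢ ∂ᵢᵐ (w ∂ᵢᵐ u)`, where `∂ᵢᵐ` is the mixed
derivative along `b i₁, …, b iₘ`. By the chain rule for linear maps, composing `u` and `w` with a
linear isometry amounts to moving `b` by that isometry. The operator does not depend on `b`: at a
point where `u` and `w` are smooth enough it is the full contraction of the tensor `Dᵐ (w Dᵐ u)`,
and contracting a pair of multilinear slots gives the same result in every orthonormal basis.
The weight `|x|ᴺ` is invariant under linear isometries.
-/

open MeasureTheory Metric Filter Matrix

noncomputable section

/-- The differential operator `u ↦ ∑_{i_1,…,i_N} ∂^N(|x|^N ∂^N u/∂x_{i_1}⋯∂x_{i_N})/∂x_{i_1}⋯∂x_{i_N}`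
(without the sign `(-1)^N`). -/
def Lop (N : ℕ) (u : EuclideanSpace ℝ (Fin N) → ℝ) (x : EuclideanSpace ℝ (Fin N)) : ℝ :=
  ∑ i : Fin N → Fin N,
    mixedPartial N N (fun y => ‖y‖ ^ N * mixedPartial N N u i y) i x

section Contraction

variable {𝕜 ι ι' κ E F : Type*} [RCLike 𝕜] [Fintype ι] [Fintype ι'] [Fintype κ] [DecidableEq κ]
  [NormedAddCommGroup E] [AddCommGroup F]

lemma multilinearMap_apply_eq_sum_inner [InnerProductSpace 𝕜 E] [Module 𝕜 F]
    (b : OrthonormalBasis ι 𝕜 E) (f : MultilinearMap 𝕜 (fun _ : κ => E) F) (v : κ → E) :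
    f v = ∑ i : κ → ι, (∏ k, inner 𝕜 (b (i k)) (v k)) • f (b ∘ i) := by
  calc f v = f fun k => ∑ j, inner 𝕜 (b j) (v k) • b j := by simp only [b.sum_repr']
    _ = ∑ i : κ → ι, f fun k => inner 𝕜 (b (i k)) (v k) • b (i k) := f.map_sum _
    _ = ∑ i : κ → ι, (∏ k, inner 𝕜 (b (i k)) (v k)) • f (b ∘ i) :=
      Finset.sum_congr rfl fun _ _ => f.map_smul_univ _ _

lemma sum_multilinearMap_orthonormalBasis_eq [InnerProductSpace ℝ E] [Module ℝ F]
    (b : OrthonormalBasis ι ℝ E) (c : OrthonormalBasis ι' ℝ E)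
    (T : MultilinearMap ℝ (fun _ : κ => E) (MultilinearMap ℝ (fun _ : κ => E) F)) :
    ∑ i : κ → ι, T (b ∘ i) (b ∘ i) = ∑ j : κ → ι', T (c ∘ j) (c ∘ j) := by
  calc ∑ i : κ → ι, T (b ∘ i) (b ∘ i)
      = ∑ i : κ → ι, ∑ j : κ → ι',
          (∏ k, inner ℝ (c (j k)) (b (i k))) • T (c ∘ j) (b ∘ i) := by
        refine Finset.sum_congr rfl fun i _ => ?_
        rw [multilinearMap_apply_eq_sum_inner c T (b ∘ i), _root_.sum_apply]
        rfl
    _ = ∑ j : κ → ι', ∑ i : κ → ι,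
          (∏ k, inner ℝ (b (i k)) (c (j k))) • T (c ∘ j) (b ∘ i) := by
        rw [Finset.sum_comm]
        simp only [real_inner_comm]
    _ = ∑ j : κ → ι', T (c ∘ j) (c ∘ j) :=
        Finset.sum_congr rfl fun j _ =>
          (multilinearMap_apply_eq_sum_inner b (T (c ∘ j)) (c ∘ j)).symm

end Contraction

section IteratedDerivative

variable {𝕜 E E' F : Type*} [NontriviallyNormedField 𝕜]
  [NormedAddCommGroup E] [NormedSpace 𝕜 E] [NormedAddCommGroup E'] [NormedSpace 𝕜 E']
  [NormedAddCommGroup F] [NormedSpace 𝕜 F]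

lemma iteratedFDeriv_comp_continuousLinearEquiv_apply (Φ : E ≃L[𝕜] E') (f : E' → F) (m : ℕ)
    (x : E) (v : Fin m → E) :
    iteratedFDeriv 𝕜 m (f ∘ Φ) x v = iteratedFDeriv 𝕜 m f (Φ x) (Φ ∘ v) := by
  have h := Φ.iteratedFDerivWithin_comp_right f uniqueDiffOn_univ (Set.mem_univ (Φ x)) m
  rw [Set.preimage_univ, iteratedFDerivWithin_univ, iteratedFDerivWithin_univ] at h
  rw [h]
  rfl

lemma iteratedFDeriv_continuousMultilinearMap_apply_const_apply {κ : Type*} [Fintype κ]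
    {G : κ → Type*} [∀ k, NormedAddCommGroup (G k)] [∀ k, NormedSpace 𝕜 (G k)]
    {T : E → ContinuousMultilinearMap 𝕜 G F} {m : ℕ} {x : E}
    (hT : ContDiffAt 𝕜 m T x) (v : ∀ k, G k) (h : Fin m → E) :
    iteratedFDeriv 𝕜 m (fun y => T y v) x h = iteratedFDeriv 𝕜 m T x h v :=
  congrArg (fun S => S h)
    ((ContinuousMultilinearMap.apply 𝕜 G F v).iteratedFDeriv_comp_left hT le_rfl)

end IteratedDerivative

section WeightedPolylaplacian

variable {ι ι' E E' F : Type*} [Fintype ι] [Fintype ι']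
  [NormedAddCommGroup E] [InnerProductSpace ℝ E] [NormedAddCommGroup E'] [InnerProductSpace ℝ E']
  [NormedAddCommGroup F] [NormedSpace ℝ F]

/-- The operator `u ↦ ∑ ∂ᵐ(w ∂ᵐu/∂x_{i_1}⋯∂x_{i_m})/∂x_{i_1}⋯∂x_{i_m}` of order `2m` with weight
`w`, in the coordinates of an orthonormal basis `b`. For `w = 1` and smooth `u` it is the
`m`-th power of the Laplacian; `Lop` is the case `m = N`, `w = |x|^N` on `ℝ^N`. -/
def weightedPolylaplacian (b : OrthonormalBasis ι ℝ E) (m : ℕ) (w : E → ℝ) (u : E → F) (x : E) :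
    F :=
  ∑ i : Fin m → ι,
    iteratedFDeriv ℝ m (fun y => w y • iteratedFDeriv ℝ m u y (b ∘ i)) x (b ∘ i)

lemma weightedPolylaplacian_comp_linearIsometryEquiv (b : OrthonormalBasis ι ℝ E)
    (Φ : E ≃ₗᵢ[ℝ] E') (m : ℕ) (w : E' → ℝ) (u : E' → F) (x : E) :
    weightedPolylaplacian b m (w ∘ Φ) (u ∘ Φ) x =
      weightedPolylaplacian (b.map Φ) m w u (Φ x) := by
  refine Finset.sum_congr rfl fun i _ => ?_
  have hbasis : ⇑(b.map Φ) ∘ i = Φ ∘ b ∘ i := funext fun k => b.map_apply Φ (i k)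
  have hinner : (fun y => (w ∘ Φ) y • iteratedFDeriv ℝ m (u ∘ Φ) y (b ∘ i)) =
      (fun z => w z • iteratedFDeriv ℝ m u z (Φ ∘ b ∘ i)) ∘ Φ := by
    funext y
    exact congrArg (w (Φ y) • ·)
      (iteratedFDeriv_comp_continuousLinearEquiv_apply Φ.toContinuousLinearEquiv u m y (b ∘ i))
  rw [hinner, hbasis]
  exact iteratedFDeriv_comp_continuousLinearEquiv_apply Φ.toContinuousLinearEquiv _ m x (b ∘ i)

lemma weightedPolylaplacian_eq_sum_tensor (b : OrthonormalBasis ι ℝ E) {m : ℕ} {w : E → ℝ}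
    {u : E → F} {x : E} (h : ContDiffAt ℝ m (fun y => w y • iteratedFDeriv ℝ m u y) x) :
    weightedPolylaplacian b m w u x =
      ∑ i : Fin m → ι,
        iteratedFDeriv ℝ m (fun y => w y • iteratedFDeriv ℝ m u y) x (b ∘ i) (b ∘ i) :=
  Finset.sum_congr rfl fun i _ =>
    iteratedFDeriv_continuousMultilinearMap_apply_const_apply h (b ∘ i) (b ∘ i)

lemma weightedPolylaplacian_eq_of_orthonormalBasis (b : OrthonormalBasis ι ℝ E)
    (c : OrthonormalBasis ι' ℝ E) {m : ℕ} {w : E → ℝ} {u : E → F} {x : E}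
    (h : ContDiffAt ℝ m (fun y => w y • iteratedFDeriv ℝ m u y) x) :
    weightedPolylaplacian b m w u x = weightedPolylaplacian c m w u x := by
  rw [weightedPolylaplacian_eq_sum_tensor b h, weightedPolylaplacian_eq_sum_tensor c h]
  exact sum_multilinearMap_orthonormalBasis_eq b c
    (ContinuousMultilinearMap.toMultilinearMapLinear.compMultilinearMap
      (iteratedFDeriv ℝ m (fun y => w y • iteratedFDeriv ℝ m u y) x).toMultilinearMap)

theorem statement4_general (b : OrthonormalBasis ι ℝ E) (c : OrthonormalBasis ι' ℝ E')
    (Φ : E ≃ₗᵢ[ℝ] E') {m : ℕ} {w : E' → ℝ} {u : E' → F} {x : E}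
    (hw : ContDiffAt ℝ m w (Φ x)) (hu : ContDiffAt ℝ (2 * m : ℕ) u (Φ x)) :
    weightedPolylaplacian b m (w ∘ Φ) (u ∘ Φ) x = weightedPolylaplacian c m w u (Φ x) := by
  have hDu : ContDiffAt ℝ m (iteratedFDeriv ℝ m u) (Φ x) :=
    hu.iteratedFDeriv_right (by exact_mod_cast (two_mul m).ge)
  rw [weightedPolylaplacian_comp_linearIsometryEquiv,
    weightedPolylaplacian_eq_of_orthonormalBasis _ c (hw.smul hDu)]

end WeightedPolylaplacian

lemma Lop_eq_weightedPolylaplacian (N : ℕ) (u : EuclideanSpace ℝ (Fin N) → ℝ) :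
    Lop N u = weightedPolylaplacian (EuclideanSpace.basisFun (Fin N) ℝ) N (‖·‖ ^ N) u := by
  have hbasis (i : Fin N → Fin N) : ⇑(EuclideanSpace.basisFun (Fin N) ℝ) ∘ i =
      fun k => EuclideanSpace.single (i k) 1 :=
    funext fun k => EuclideanSpace.basisFun_apply (Fin N) ℝ (i k)
  funext x
  simp only [Lop, mixedPartial, weightedPolylaplacian, hbasis, smul_eq_mul]

lemma exists_linearIsometryEquiv_coe_eq_toEuclideanLin {𝕜 n : Type*} [RCLike 𝕜] [Fintype n]
    [DecidableEq n] {A : Matrix n n 𝕜} (hA : Aᴴ * A = 1) :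
    ∃ Φ : EuclideanSpace 𝕜 n ≃ₗᵢ[𝕜] EuclideanSpace 𝕜 n, ⇑Φ = Matrix.toEuclideanLin A := by
  have hunitary : A ∈ unitary (Matrix n n 𝕜) := Matrix.mem_unitaryGroup_iff'.mpr hA
  exact ⟨Unitary.linearIsometryEquiv
    ⟨Matrix.toEuclideanCLM (n := n) (𝕜 := 𝕜) A, Unitary.map_mem _ hunitary⟩, rfl⟩

/-- the operator `u ↦ ∑ ∂^N(|x|^N ∂^N u)` commutes with the action of `O(N)`. -/
theorem statement4 (N : ℕ) (hN : 1 ≤ N)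
    (u : EuclideanSpace ℝ (Fin N) → ℝ)
    (hu : ContDiffOn ℝ ((2 * N : ℕ) : ℕ∞) u {(0 : EuclideanSpace ℝ (Fin N))}ᶜ)
    (A : Matrix (Fin N) (Fin N) ℝ) (hA : Aᵀ * A = 1)
    (x : EuclideanSpace ℝ (Fin N)) (hx : x ≠ 0) :
    Lop N (fun y => u (Matrix.toEuclideanLin A y)) x = Lop N u (Matrix.toEuclideanLin A x) := by
  obtain ⟨Φ, hΦ⟩ := exists_linearIsometryEquiv_coe_eq_toEuclideanLin (A := A)
    (by rwa [conjTranspose_eq_transpose_of_trivial])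
  have hΦx : Φ x ≠ 0 := by simpa using hx
  rw [← hΦ]
  let basis := EuclideanSpace.basisFun (Fin N) ℝ
  calc Lop N (u ∘ Φ) x = weightedPolylaplacian basis N ((‖·‖ ^ N) ∘ Φ) (u ∘ Φ) x := by
        simp only [Lop_eq_weightedPolylaplacian, Function.comp_def, Φ.norm_map, basis]
    _ = weightedPolylaplacian basis N (‖·‖ ^ N) u (Φ x) :=
        statement4_general basis basis Φ ((contDiffAt_norm ℝ hΦx).pow N)
          (hu.contDiffAt (isOpen_compl_singleton.mem_nhds hΦx))
    _ = Lop N u (Φ x) := by rw [Lop_eq_weightedPolylaplacian]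
end
end

section
/- Let N ≥ 1. Then for every x ∈ ℝ^N∖{0}, ∑_{(i_1,…,i_N)∈{1,…,N}^N} ∂^N/∂x_{i_1}⋯∂x_{i_N} ( |x|^N · ∂^N log|x| / ∂x_{i_1}⋯∂x_{i_N} )(x) = 0; i.e. away from the origin, log|x| is a pointwise solution of the 2N-th order equation ∑_{i_1,…,i_N} ∂^N(|x|^N ∂^N u) = 0. -/
open MeasureTheory Metric Filter Matrix

noncomputable section

/-!
Write `P_m(g) u = ∑ ∂^m (g ∂^m u)` and `Δ = P_1(1)`. Since partial derivatives commute,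
`2 P_{m+1}(g) + P_m(Δ g) = Δ P_m(g) + P_m(g) Δ`, which determines all `P_m` from the Laplacian
alone. In particular `P_m(|x|^a)` maps `|x|^s` to a multiple of `|x|^(s + a - 2 m)`, and the
coefficient is invariant under `s ↦ 2 m - a - N - s`.

Now `P_m(|x|^(2 m - N)) log |x| = 0` for all `m ≥ 1` by induction on `m`. With
`g = |x|^(2 m + 2 - N)` in the recursion, `Δ P_m(g) log |x|` is a multiple of `Δ |x|^(2 - N) = 0`;
next, `P_m(g) Δ log |x|` is a multiple of `P_m(g) |x|^(-2)`, which vanishes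
because the symmetry exchanges `-2` with `0` and `P_m(g) 1 = 0`; and `P_m(Δ g) log |x| = 0` by the
induction hypothesis.

The recursion holds for any commuting derivations of a commutative algebra; for germs at `x` of
smooth functions they are the actual partial derivatives.
-/

open scoped ContDiff Topology

section CommutingDerivations

variable {𝕜 A ι : Type*} [CommRing 𝕜] [CommRing A] [Algebra 𝕜 A] {D : ι → Derivation 𝕜 A A}
  {m : ℕ}

/-- The composition `D (i 0) ∘ ⋯ ∘ D (i (m - 1))`, an abstract mixed partial derivative. -/
def derivWord (D : ι → Derivation 𝕜 A A) (i : Fin m → ι) : Module.End 𝕜 A :=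
  (List.ofFn fun k => (D (i k) : Module.End 𝕜 A)).prod

lemma derivWord_zero (i : Fin 0 → ι) : derivWord D i = 1 := by
  simp only [derivWord, List.ofFn_zero, List.prod_nil]

lemma derivWord_succ (i : Fin (m + 1) → ι) :
    derivWord D i = D (i 0) * derivWord D (Fin.tail i) := by
  simp only [derivWord, List.ofFn_succ, List.prod_cons, Fin.tail]

lemma commute_derivWord (hD : ∀ i j, Commute (D i : Module.End 𝕜 A) (D j)) (j : ι)
    (i : Fin m → ι) : Commute (D j : Module.End 𝕜 A) (derivWord D i) := by
  refine Commute.list_prod_right _ _ fun T hT => ?_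
  obtain ⟨k, rfl⟩ := (List.mem_ofFn' _ _).1 hT
  exact hD j (i k)

lemma derivation_mul_lmul (d : Derivation 𝕜 A A) (g : A) :
    (d : Module.End 𝕜 A) * Algebra.lmul 𝕜 A g =
      Algebra.lmul 𝕜 A (d g) + Algebra.lmul 𝕜 A g * (d : Module.End 𝕜 A) := by
  ext u
  simp only [Module.End.mul_apply, LinearMap.add_apply, Algebra.coe_lmul_eq_mul,
    LinearMap.mul_apply_apply, Derivation.coeFn_coe, Derivation.leibniz, smul_eq_mul]
  ring

lemma derivation_units_zpow (d : Derivation 𝕜 A A) (u : Aˣ) (n : ℤ) :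
    d ↑(u ^ n) = n • ((u ^ (n - 1) : Aˣ) * d u) := by
  have step (n : ℤ) : d ↑(u ^ (n + 1)) = (u ^ n : Aˣ) * d u + u * d ↑(u ^ n) := by
    rw [_root_.zpow_add_one, Units.val_mul, Derivation.leibniz, smul_eq_mul, smul_eq_mul]
  have mul_prev (n : ℤ) : (u : A) * (u ^ (n - 1) : Aˣ) = (u ^ n : Aˣ) := by
    rw [← Units.val_mul, ← _root_.zpow_one_add, add_sub_cancel]
  induction n with
  | zero => simp
  | succ n ih =>
    rw [step, ih, mul_smul_comm, ← mul_assoc, mul_prev, add_sub_cancel_right, add_smul, one_smul,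
      add_comm]
  | pred n ih =>
    have h := step (-n - 1)
    rw [sub_add_cancel, ih] at h
    refine u.isUnit.mul_left_cancel ?_
    rw [mul_smul_comm, ← mul_assoc, mul_prev, sub_smul, one_smul, h, add_sub_cancel_left]

variable [Fintype ι]

/-- The Laplacian `∑ j, D j ∘ D j` of a finite family of derivations. -/
def derivLaplacian (D : ι → Derivation 𝕜 A A) : Module.End 𝕜 A :=
  ∑ j, (D j : Module.End 𝕜 A) * D j

/-- The operator `u ↦ ∑ ∂^m (g ∂^m u)`, summed over all mixed derivatives `∂^m` of order `m`. -/
def weightedPolyLaplacian (D : ι → Derivation 𝕜 A A) (m : ℕ) (g : A) : Module.End 𝕜 A :=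
  ∑ i : Fin m → ι, derivWord D i * Algebra.lmul 𝕜 A g * derivWord D i

lemma derivLaplacian_apply (u : A) : derivLaplacian D u = ∑ j, D j (D j u) := by
  simp only [derivLaplacian, LinearMap.sum_apply, Module.End.mul_apply, Derivation.coeFn_coe]

lemma commute_derivLaplacian (hD : ∀ i j, Commute (D i : Module.End 𝕜 A) (D j)) (j : ι) :
    Commute (D j : Module.End 𝕜 A) (derivLaplacian D) :=
  Commute.sum_right _ _ _ fun i _ => (hD j i).mul_right (hD j i)

lemma weightedPolyLaplacian_zero (g : A) :
    weightedPolyLaplacian D 0 g = Algebra.lmul 𝕜 A g := by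
  simp only [weightedPolyLaplacian, Fintype.sum_unique, derivWord_zero, one_mul, mul_one]

lemma weightedPolyLaplacian_succ (hD : ∀ i j, Commute (D i : Module.End 𝕜 A) (D j)) (g : A) :
    weightedPolyLaplacian D (m + 1) g =
      ∑ j, (D j : Module.End 𝕜 A) * weightedPolyLaplacian D m g * D j := by
  simp only [weightedPolyLaplacian]
  rw [← (Fin.consEquiv fun _ => ι).sum_comp, Fintype.sum_prod_type]
  refine Finset.sum_congr rfl fun j _ => ?_
  rw [Finset.mul_sum, Finset.sum_mul]
  refine Finset.sum_congr rfl fun i _ => ?_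
  simp only [Fin.consEquiv, Equiv.coe_fn_mk, derivWord_succ, Fin.cons_zero, Fin.tail_cons,
    mul_assoc]
  rw [← (commute_derivWord hD j i).eq]

lemma weightedPolyLaplacian_one_apply (g u : A) :
    weightedPolyLaplacian D 1 g u = ∑ j, D j (g * D j u) := by
  rw [weightedPolyLaplacian, ← (Equiv.funUnique (Fin 1) ι).symm.sum_comp]
  simp [derivWord]

lemma weightedPolyLaplacian_smul (m : ℕ) (c : 𝕜) (g : A) :
    weightedPolyLaplacian D m (c • g) = c • weightedPolyLaplacian D m g := by
  simp only [weightedPolyLaplacian, map_smul, mul_smul_comm, smul_mul_assoc, Finset.smul_sum]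

lemma two_smul_sum_mul_lmul_mul (g : A) :
    (2 : 𝕜) • ∑ j, (D j : Module.End 𝕜 A) * Algebra.lmul 𝕜 A g * D j +
        Algebra.lmul 𝕜 A (derivLaplacian D g) =
      derivLaplacian D * Algebra.lmul 𝕜 A g + Algebra.lmul 𝕜 A g * derivLaplacian D := by
  rw [derivLaplacian_apply, map_sum]
  simp only [derivLaplacian, Finset.mul_sum, Finset.sum_mul, Finset.smul_sum,
    ← Finset.sum_add_distrib]
  refine Finset.sum_congr rfl fun j _ => ?_
  simp only [mul_assoc, derivation_mul_lmul, mul_add, two_smul]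
  simp only [← mul_assoc, derivation_mul_lmul, add_mul]
  abel

lemma two_smul_weightedPolyLaplacian_succ (hD : ∀ i j, Commute (D i : Module.End 𝕜 A) (D j))
    (m : ℕ) (g : A) :
    (2 : 𝕜) • weightedPolyLaplacian D (m + 1) g +
        weightedPolyLaplacian D m (derivLaplacian D g) =
      derivLaplacian D * weightedPolyLaplacian D m g +
        weightedPolyLaplacian D m g * derivLaplacian D := by
  induction m with
  | zero =>
    simpa only [weightedPolyLaplacian_succ hD, weightedPolyLaplacian_zero] using
      two_smul_sum_mul_lmul_mul g
  | succ m ih =>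
    rw [weightedPolyLaplacian_succ hD (m := m + 1)]
    simp only [weightedPolyLaplacian_succ hD (m := m)] at ih ⊢
    set Δ := derivLaplacian D
    set P := weightedPolyLaplacian D m g
    have conj (j : ι) : (D j : Module.End 𝕜 A) * (Δ * P + P * Δ) * D j =
        Δ * (D j * P * D j) + D j * P * D j * Δ := by
      have hΔ : (D j : Module.End 𝕜 A) * Δ = Δ * D j := commute_derivLaplacian hD j
      simp only [mul_add, add_mul, mul_assoc, ← hΔ]
      simp only [← mul_assoc, hΔ]
    rw [Finset.mul_sum, Finset.sum_mul, ← Finset.sum_add_distrib, Finset.smul_sum,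
      ← Finset.sum_add_distrib]
    refine Finset.sum_congr rfl fun j _ => ?_
    rw [← conj, ← ih]
    simp only [mul_add, add_mul, mul_smul_comm, smul_mul_assoc]

end CommutingDerivations

section RadialSymbol

variable {R 𝕜 : Type*} [CommRing R] [Field 𝕜]

/-- The factor `s (s + N - 2)` in `Δ |x|^s = s (s + N - 2) |x|^(s - 2)` on `ℝ^N`. -/
def radialEigenvalue (N s : R) : R := s * (s + N - 2)

/-- The factor `c` in `∑ ∂^k (|x|^a ∂^k |x|^s) = c |x|^(s + a - 2 * k)` on `ℝ^N`. -/
def radialSymbol (N : 𝕜) : ℕ → 𝕜 → 𝕜 → 𝕜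
  | 0, _, _ => 1
  | k + 1, a, s =>
    (radialEigenvalue N (s + a - 2 * k) * radialSymbol N k a s +
      radialEigenvalue N s * radialSymbol N k a (s - 2) -
      radialEigenvalue N a * radialSymbol N k (a - 2) s) / 2

lemma radialEigenvalue_reflect (N s : R) :
    radialEigenvalue N (2 - N - s) = radialEigenvalue N s := by
  simp only [radialEigenvalue]
  ring

/-- Integration by parts exchanges the exponents `s` and `t`: this is self-adjointness of
`u ↦ ∑ ∂^k (|x|^a ∂^k u)`. -/
lemma radialSymbol_reflect (N : 𝕜) (k : ℕ) {a s t : 𝕜} (h : s + t = 2 * k - a - N) :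
    radialSymbol N k a s = radialSymbol N k a t := by
  induction k generalizing a s t with
  | zero => rfl
  | succ k ih =>
    push_cast at h
    have hs : s + a - 2 * k = 2 - N - t := by linear_combination h
    have ht : t + a - 2 * k = 2 - N - s := by linear_combination h
    simp only [radialSymbol, hs, ht, radialEigenvalue_reflect]
    rw [ih (s := s) (t := t - 2) (by linear_combination h),
      ih (s := s - 2) (t := t) (by linear_combination h),
      ih (a := a - 2) (s := s) (t := t) (by linear_combination h)]
    ring

lemma radialSymbol_succ_zero_right (N : 𝕜) (k : ℕ) (a : 𝕜) :
    radialSymbol N (k + 1) a 0 = 0 := by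
  induction k generalizing a with
  | zero => simp [radialSymbol, radialEigenvalue]
  | succ k ih =>
    rw [radialSymbol, ih, ih]
    simp [radialEigenvalue]

end RadialSymbol

/-- An algebraic model of the punctured space `ℝ^ι ∖ {0}`: commuting derivations `D i`, coordinate
functions dual to them, and an invertible radius `r` with `r ^ 2 = ∑ j, x j ^ 2`. -/
structure RadialCoordinates {𝕜 A ι : Type*} [CommRing 𝕜] [CommRing A] [Algebra 𝕜 A] [Fintype ι]
    [DecidableEq ι] (D : ι → Derivation 𝕜 A A) where
  commute (i j : ι) : Commute (D i : Module.End 𝕜 A) (D j)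
  coord : ι → A
  radius : Aˣ
  deriv_coord (i j : ι) : D i (coord j) = if i = j then 1 else 0
  sum_coord_sq : ∑ j, coord j ^ 2 = (radius : A) ^ 2

namespace RadialCoordinates

section Ring

variable {𝕜 A ι : Type*} [CommRing 𝕜] [CommRing A] [Algebra 𝕜 A] [Fintype ι] [DecidableEq ι]
  {D : ι → Derivation 𝕜 A A} (c : RadialCoordinates D)

/-- The integer power `r ^ n` of the radius, as an element of the algebra. -/
def radiusPow (n : ℤ) : A := ↑(c.radius ^ n)

lemma radiusPow_mul_radiusPow (a b : ℤ) :
    c.radiusPow a * c.radiusPow b = c.radiusPow (a + b) := by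
  rw [radiusPow, radiusPow, radiusPow, ← Units.val_mul, _root_.zpow_add]

lemma sum_coord_sq_eq_radiusPow : ∑ j, c.coord j ^ 2 = c.radiusPow 2 := by
  rw [c.sum_coord_sq, radiusPow, ← Units.val_pow_eq_pow_val, zpow_ofNat]

/-- `L` is a logarithm of the radius as far as the derivations can see. -/
def IsLogRadius (L : A) : Prop :=
  ∀ j, D j L = ↑c.radius⁻¹ * D j c.radius

end Ring

section Field

variable {𝕜 A ι : Type*} [Field 𝕜] [NeZero (2 : 𝕜)] [CommRing A] [Algebra 𝕜 A] [Fintype ι]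
  [DecidableEq ι] {D : ι → Derivation 𝕜 A A} (c : RadialCoordinates D)

lemma deriv_radius (j : ι) : D j c.radius = c.coord j * ↑c.radius⁻¹ := by
  have h := congrArg (D j) c.sum_coord_sq
  simp only [map_sum, Derivation.leibniz_pow, c.deriv_coord, smul_eq_mul, mul_ite, mul_one,
    mul_zero, smul_ite, smul_zero, Finset.sum_ite_eq, Finset.mem_univ, if_true] at h
  have h2 : (2 : 𝕜) • (c.radius * D j c.radius) = (2 : 𝕜) • c.coord j := by
    simpa [ofNat_smul_eq_nsmul] using h.symm
  rw [← smul_right_injective A (two_ne_zero' 𝕜) h2, mul_right_comm, Units.mul_inv, one_mul]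

lemma deriv_radiusPow (j : ι) (n : ℤ) :
    D j (c.radiusPow n) = (n : 𝕜) • (c.coord j * c.radiusPow (n - 2)) := by
  have h : c.radiusPow (n - 1) * ↑c.radius⁻¹ = c.radiusPow (n - 2) := by
    rw [radiusPow, radiusPow, ← Units.val_mul, ← _root_.zpow_sub_one]
    congr 2
    ring
  rw [radiusPow, derivation_units_zpow, deriv_radius, Int.cast_smul_eq_zsmul, ← h, radiusPow]
  ring_nf

lemma divergence_coord_mul_radiusPow (n : ℤ) :
    ∑ j, D j (c.coord j * c.radiusPow n) = (n + Fintype.card ι : 𝕜) • c.radiusPow n := by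
  have term (j : ι) : D j (c.coord j * c.radiusPow n) =
      (n : 𝕜) • (c.coord j ^ 2 * c.radiusPow (n - 2)) + c.radiusPow n := by
    rw [Derivation.leibniz, deriv_radiusPow, c.deriv_coord, if_pos rfl, smul_eq_mul, smul_eq_mul,
      mul_one, mul_smul_comm, ← mul_assoc, sq]
  rw [Finset.sum_congr rfl fun j _ => term j, Finset.sum_add_distrib, ← Finset.smul_sum,
    ← Finset.sum_mul, sum_coord_sq_eq_radiusPow, radiusPow_mul_radiusPow, add_sub_cancel,
    Finset.sum_const, Finset.card_univ, add_smul, Nat.cast_smul_eq_nsmul]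

lemma derivLaplacian_radiusPow (n : ℤ) :
    derivLaplacian D (c.radiusPow n) =
      radialEigenvalue (Fintype.card ι : 𝕜) n • c.radiusPow (n - 2) := by
  rw [derivLaplacian_apply]
  simp only [deriv_radiusPow, Derivation.map_smul, ← Finset.smul_sum]
  rw [divergence_coord_mul_radiusPow, smul_smul, radialEigenvalue]
  push_cast
  congr 1
  ring

lemma weightedPolyLaplacian_succ_radiusPow (m : ℕ) (a : ℤ) (u : A) :
    weightedPolyLaplacian D (m + 1) (c.radiusPow a) u = (2⁻¹ : 𝕜) •
      (derivLaplacian D (weightedPolyLaplacian D m (c.radiusPow a) u) +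
        weightedPolyLaplacian D m (c.radiusPow a) (derivLaplacian D u) -
        radialEigenvalue (Fintype.card ι : 𝕜) a •
          weightedPolyLaplacian D m (c.radiusPow (a - 2)) u) := by
  have h := LinearMap.congr_fun
    (two_smul_weightedPolyLaplacian_succ c.commute m (c.radiusPow a)) u
  simp only [derivLaplacian_radiusPow, weightedPolyLaplacian_smul, LinearMap.add_apply,
    LinearMap.smul_apply, Module.End.mul_apply] at h
  rw [← h, add_sub_cancel_right, inv_smul_smul₀ two_ne_zero]

lemma weightedPolyLaplacian_radiusPow_radiusPow (m : ℕ) (a s : ℤ) :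
    weightedPolyLaplacian D m (c.radiusPow a) (c.radiusPow s) =
      radialSymbol (Fintype.card ι : 𝕜) m a s • c.radiusPow (s + a - 2 * m) := by
  induction m generalizing a s with
  | zero =>
    simp [weightedPolyLaplacian_zero, radialSymbol, radiusPow_mul_radiusPow, add_comm]
  | succ m ih =>
    have h₁ : s + a - 2 * m - 2 = s + a - 2 * (m + 1 : ℕ) := by push_cast; ring
    have h₂ : s - 2 + a - 2 * m = s + a - 2 * (m + 1 : ℕ) := by push_cast; ring
    have h₃ : s + (a - 2) - 2 * m = s + a - 2 * (m + 1 : ℕ) := by push_cast; ring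
    rw [weightedPolyLaplacian_succ_radiusPow, derivLaplacian_radiusPow, map_smul, ih, ih, ih,
      map_smul, derivLaplacian_radiusPow, h₁, h₂, h₃, radialSymbol]
    push_cast
    module

variable {L : A}

lemma deriv_log (hL : c.IsLogRadius L) (j : ι) :
    D j L = c.coord j * c.radiusPow (-2) := by
  rw [hL, deriv_radius, mul_left_comm, ← Units.val_mul, ← mul_inv, radiusPow,
    _root_.zpow_neg, zpow_ofNat, sq]

lemma derivLaplacian_log (hL : c.IsLogRadius L) :
    derivLaplacian D L = (Fintype.card ι - 2 : 𝕜) • c.radiusPow (-2) := by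
  simp only [derivLaplacian_apply, c.deriv_log hL, divergence_coord_mul_radiusPow]
  push_cast
  rw [neg_add_eq_sub]

lemma weightedPolyLaplacian_one_radiusPow_log (hL : c.IsLogRadius L) (a : ℤ) :
    weightedPolyLaplacian D 1 (c.radiusPow a) L =
      (a - 2 + Fintype.card ι : 𝕜) • c.radiusPow (a - 2) := by
  simp only [weightedPolyLaplacian_one_apply, c.deriv_log hL, mul_left_comm (c.radiusPow a),
    radiusPow_mul_radiusPow, ← sub_eq_add_neg, divergence_coord_mul_radiusPow]
  push_cast
  rfl

lemma exists_weightedPolyLaplacian_succ_log (hL : c.IsLogRadius L) (m : ℕ) (a : ℤ) :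
    ∃ C : 𝕜, weightedPolyLaplacian D (m + 1) (c.radiusPow a) L =
      C • c.radiusPow (a - 2 * (m + 1)) := by
  induction m generalizing a with
  | zero => exact ⟨_, by simpa using c.weightedPolyLaplacian_one_radiusPow_log hL a⟩
  | succ m ih =>
    obtain ⟨C, hC⟩ := ih a
    obtain ⟨C', hC'⟩ := ih (a - 2)
    have h₁ : a - 2 * (m + 1) - 2 = a - 2 * ((m + 1 : ℕ) + 1) := by push_cast; ring
    have h₂ : -2 + a - 2 * (m + 1 : ℕ) = a - 2 * ((m + 1 : ℕ) + 1) := by push_cast; ring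
    have h₃ : a - 2 - 2 * (m + 1) = a - 2 * ((m + 1 : ℕ) + 1) := by push_cast; ring
    rw [weightedPolyLaplacian_succ_radiusPow, hC, hC', derivLaplacian_log c hL, map_smul, map_smul,
      derivLaplacian_radiusPow, weightedPolyLaplacian_radiusPow_radiusPow, h₁, h₂, h₃]
    exact ⟨_, by simp only [smul_smul, ← add_smul, ← sub_smul]; rfl⟩

theorem weightedPolyLaplacian_log_eq_zero (hL : c.IsLogRadius L) {m : ℕ} (hm : 1 ≤ m) :
    weightedPolyLaplacian D m (c.radiusPow (2 * m - Fintype.card ι)) L = 0 := by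
  set N : ℤ := (Fintype.card ι : ℤ) with hN
  induction m, hm using Nat.le_induction with
  | base =>
    rw [weightedPolyLaplacian_one_radiusPow_log c hL, hN]
    simp
  | succ m hm ih =>
    obtain ⟨k, rfl⟩ := Nat.exists_eq_add_of_le' hm
    obtain ⟨C, hC⟩ := c.exists_weightedPolyLaplacian_succ_log hL k (2 * (k + 1 + 1 : ℕ) - N)
    have harmonic : derivLaplacian D (c.radiusPow (2 - N)) = 0 := by
      rw [derivLaplacian_radiusPow, radialEigenvalue, hN]
      simp
    have symbol_vanishes :
        radialSymbol (Fintype.card ι : 𝕜) (k + 1) (2 * (k + 1 + 1 : ℕ) - N : ℤ) (-2 : ℤ) = 0 := by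
      rw [radialSymbol_reflect _ _ (t := 0) (by rw [hN]; push_cast; ring),
        radialSymbol_succ_zero_right]
    have h₁ : 2 * ((k + 1 + 1 : ℕ) : ℤ) - N - 2 * (k + 1) = 2 - N := by push_cast; ring
    have h₂ : 2 * ((k + 1 + 1 : ℕ) : ℤ) - N - 2 = 2 * (k + 1 : ℕ) - N := by push_cast; ring
    rw [weightedPolyLaplacian_succ_radiusPow, hC, h₁, h₂, ih, derivLaplacian_log c hL, map_smul,
      map_smul, harmonic, weightedPolyLaplacian_radiusPow_radiusPow, symbol_vanishes]
    simp only [smul_zero, zero_smul, add_zero, sub_zero]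

end Field

end RadialCoordinates

section SmoothGerms

variable {𝕜 E F : Type*} [NontriviallyNormedField 𝕜] [NormedAddCommGroup E] [NormedSpace 𝕜 E]
  [NormedAddCommGroup F] [NormedSpace 𝕜 F] {x : E}

instance germAlgebra {α : Type*} (l : Filter α) : Algebra 𝕜 (Germ l 𝕜) :=
  Algebra.ofModule
    (fun c φ ψ => Germ.inductionOn₂ φ ψ fun f g => congrArg Germ.ofFun (smul_mul_assoc c f g))
    (fun c φ ψ => Germ.inductionOn₂ φ ψ fun f g => congrArg Germ.ofFun (mul_smul_comm c f g))

variable (𝕜) in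
/-- The algebra of germs at `x` of functions that are smooth at `x`. -/
def smoothGerm (x : E) : Subalgebra 𝕜 (Germ (𝓝 x) 𝕜) where
  carrier := {φ | ∃ f : E → 𝕜, ContDiffAt 𝕜 ∞ f x ∧ ↑f = φ}
  mul_mem' := by
    rintro _ _ ⟨f, hf, rfl⟩ ⟨g, hg, rfl⟩
    exact ⟨f * g, hf.mul hg, rfl⟩
  add_mem' := by
    rintro _ _ ⟨f, hf, rfl⟩ ⟨g, hg, rfl⟩
    exact ⟨f + g, hf.add hg, rfl⟩
  algebraMap_mem' a := ⟨fun _ => a, contDiffAt_const, by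
    rw [Algebra.algebraMap_eq_smul_one]
    exact congrArg _ (funext fun _ => (mul_one a).symm)⟩

/-- The smooth germ represented by a function that is smooth at `x`. -/
def smoothGermOf (f : E → 𝕜) (hf : ContDiffAt 𝕜 ∞ f x) : smoothGerm 𝕜 x :=
  ⟨f, f, hf, rfl⟩

lemma eventually_differentiableAt {f : E → F} (hf : ContDiffAt 𝕜 ∞ f x) :
    ∀ᶠ y in 𝓝 x, DifferentiableAt 𝕜 f y :=
  ((contDiffAt_infty.1 hf 1).eventually (by simp)).mono fun _ hy =>
    hy.differentiableAt (by simp)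

lemma contDiffAt_fderiv_apply {f : E → F} (hf : ContDiffAt 𝕜 ∞ f x) (v : E) :
    ContDiffAt 𝕜 ∞ (fun y => fderiv 𝕜 f y v) x :=
  (hf.fderiv_right (m := ∞) (by simp)).clm_apply contDiffAt_const

/-- The derivative in the direction `v`, on germs of arbitrary functions. -/
def germDirDeriv (v : E) : Germ (𝓝 x) 𝕜 → Germ (𝓝 x) 𝕜 :=
  Germ.map' (fun f y => fderiv 𝕜 f y v) fun _ _ h => h.fderiv.fun_comp fun T => T v

variable (𝕜) in
/-- The derivative in the direction `v`, as a derivation of the algebra of smooth germs. -/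
def smoothGermDeriv (x v : E) : Derivation 𝕜 (smoothGerm 𝕜 x) (smoothGerm 𝕜 x) :=
  Derivation.mk'
    { toFun φ := ⟨germDirDeriv v φ.1, by
        obtain ⟨_, f, hf, rfl⟩ := φ
        exact ⟨_, contDiffAt_fderiv_apply hf v, rfl⟩⟩
      map_add' := by
        rintro ⟨_, f, hf, rfl⟩ ⟨_, g, hg, rfl⟩
        refine Subtype.ext (Germ.coe_eq.2 ?_)
        filter_upwards [eventually_differentiableAt hf, eventually_differentiableAt hg]
          with y hfy hgy
        change fderiv 𝕜 (f + g) y v = fderiv 𝕜 f y v + fderiv 𝕜 g y v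
        rw [fderiv_add hfy hgy, _root_.add_apply]
      map_smul' := by
        rintro a ⟨_, f, hf, rfl⟩
        refine Subtype.ext (Germ.coe_eq.2 ?_)
        filter_upwards [eventually_differentiableAt hf] with y hfy
        change fderiv 𝕜 (a • f) y v = a • fderiv 𝕜 f y v
        rw [fderiv_const_smul hfy, _root_.smul_apply] }
    (by
      rintro ⟨_, f, hf, rfl⟩ ⟨_, g, hg, rfl⟩
      refine Subtype.ext (Germ.coe_eq.2 ?_)
      filter_upwards [eventually_differentiableAt hf, eventually_differentiableAt hg]
        with y hfy hgy
      change fderiv 𝕜 (f * g) y v = f y * fderiv 𝕜 g y v + g y * fderiv 𝕜 f y v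
      rw [fderiv_mul hfy hgy]
      rfl)

lemma smoothGermDeriv_smoothGermOf (v : E) {f : E → 𝕜} (hf : ContDiffAt 𝕜 ∞ f x) :
    smoothGermDeriv 𝕜 x v (smoothGermOf f hf) =
      smoothGermOf (fun y => fderiv 𝕜 f y v) (contDiffAt_fderiv_apply hf v) :=
  rfl

lemma smoothGermDeriv_continuousLinearMap (T : E →L[𝕜] 𝕜) (v : E) :
    smoothGermDeriv 𝕜 x v (smoothGermOf T T.contDiff.contDiffAt) =
      algebraMap 𝕜 (smoothGerm 𝕜 x) (T v) := by
  rw [Algebra.algebraMap_eq_smul_one]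
  refine Subtype.ext (Germ.coe_eq.2 (.of_forall fun y => ?_))
  change fderiv 𝕜 T y v = T v * 1
  rw [T.fderiv, mul_one]

lemma commute_smoothGermDeriv [IsRCLikeNormedField 𝕜] (v w : E) :
    Commute (smoothGermDeriv 𝕜 x v : Module.End 𝕜 (smoothGerm 𝕜 x))
      (smoothGermDeriv 𝕜 x w : Module.End 𝕜 (smoothGerm 𝕜 x)) := by
  refine LinearMap.ext ?_
  rintro ⟨_, f, hf, rfl⟩
  refine Subtype.ext (Germ.coe_eq.2 ?_)
  have hf2 : ContDiffAt 𝕜 2 f x := mod_cast contDiffAt_infty.1 hf 2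
  filter_upwards [hf2.eventually (by simp)] with y hy
  have hd : DifferentiableAt 𝕜 (fderiv 𝕜 f) y :=
    (hy.fderiv_right (m := 1) (by norm_num)).differentiableAt one_ne_zero
  change fderiv 𝕜 (fun z => fderiv 𝕜 f z w) y v = fderiv 𝕜 (fun z => fderiv 𝕜 f z v) y w
  rw [fderiv_clm_apply hd (differentiableAt_const w),
    fderiv_clm_apply hd (differentiableAt_const v)]
  simpa using (hy.isSymmSndFDerivAt (by simp)).eq v w

lemma contDiffAt_iteratedFDeriv_apply {f : E → F} (hf : ContDiffAt 𝕜 ∞ f x) {m : ℕ}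
    (v : Fin m → E) : ContDiffAt 𝕜 ∞ (fun y => iteratedFDeriv 𝕜 m f y v) x :=
  (ContinuousMultilinearMap.apply 𝕜 (fun _ : Fin m => E) F v).contDiff.contDiffAt.comp x
    (hf.iteratedFDeriv_right (m := ∞) (i := m) (by norm_cast))

lemma fderiv_iteratedFDeriv_apply {f : E → F} {m : ℕ}
    (hf : DifferentiableAt 𝕜 (iteratedFDeriv 𝕜 m f) x) (v : Fin (m + 1) → E) :
    fderiv 𝕜 (fun y => iteratedFDeriv 𝕜 m f y (Fin.tail v)) x (v 0) =
      iteratedFDeriv 𝕜 (m + 1) f x v := by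
  rw [iteratedFDeriv_succ_apply_left, fderiv_continuousMultilinear_apply_const_apply hf]

lemma derivWord_smoothGermOf {ι : Type*} (b : ι → E) {f : E → 𝕜} (hf : ContDiffAt 𝕜 ∞ f x)
    {m : ℕ} (i : Fin m → ι) :
    derivWord (fun j => smoothGermDeriv 𝕜 x (b j)) i (smoothGermOf f hf) =
      smoothGermOf (fun y => iteratedFDeriv 𝕜 m f y fun k => b (i k))
        (contDiffAt_iteratedFDeriv_apply hf _) := by
  induction m with
  | zero => exact congrFun (congrArg _ (derivWord_zero i)) _
  | succ m ih =>
    rw [derivWord_succ, Module.End.mul_apply, ih, Derivation.coeFn_coe,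
      smoothGermDeriv_smoothGermOf]
    refine Subtype.ext (Germ.coe_eq.2 ?_)
    filter_upwards [(contDiffAt_infty.1 hf (m + 1)).eventually (by simp)] with y hy
    exact fderiv_iteratedFDeriv_apply
      (hy.differentiableAt_iteratedFDeriv (by exact_mod_cast m.lt_succ_self)) fun k => b (i k)

/-- The unit of the algebra of smooth germs given by a function that does not vanish at `x`. -/
def smoothGermUnit (f : E → 𝕜) (hf : ContDiffAt 𝕜 ∞ f x) (hx : f x ≠ 0) :
    (smoothGerm 𝕜 x)ˣ :=
  Units.mkOfMulEqOne (smoothGermOf f hf) (smoothGermOf f⁻¹ (hf.inv hx)) <|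
    Subtype.ext <| Germ.coe_eq.2 <| (hf.continuousAt.eventually_ne hx).mono fun _ =>
      mul_inv_cancel₀

lemma contDiffAt_zpow {k : ℕ∞ω} {f : E → 𝕜} (hf : ContDiffAt 𝕜 k f x) (hx : f x ≠ 0) (n : ℤ) :
    ContDiffAt 𝕜 k (fun y => f y ^ n) x := by
  cases n with
  | ofNat n => simpa only [Int.ofNat_eq_natCast, zpow_natCast] using hf.pow n
  | negSucc n =>
    simp only [zpow_negSucc]
    exact (hf.pow (n + 1)).inv (pow_ne_zero _ hx)

lemma smoothGermUnit_zpow {f : E → 𝕜} (hf : ContDiffAt 𝕜 ∞ f x) (hx : f x ≠ 0) (n : ℤ) :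
    ((smoothGermUnit f hf hx ^ n : (smoothGerm 𝕜 x)ˣ) : smoothGerm 𝕜 x) =
      smoothGermOf (fun y => f y ^ n) (contDiffAt_zpow hf hx n) := by
  refine Subtype.ext ?_
  change _ = ((f ^ n : E → 𝕜) : Germ (𝓝 x) 𝕜)
  cases n with
  | ofNat n =>
    rw [Int.ofNat_eq_natCast, _root_.zpow_natCast, zpow_natCast, Units.val_pow_eq_pow_val]
    rfl
  | negSucc n =>
    rw [_root_.zpow_negSucc, zpow_negSucc, ← inv_pow, ← inv_pow, Units.val_pow_eq_pow_val]
    rfl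

lemma value_weightedPolyLaplacian_smoothGermOf {ι : Type*} [Fintype ι] (b : ι → E) (m : ℕ)
    {g u : E → 𝕜} (hg : ContDiffAt 𝕜 ∞ g x) (hu : ContDiffAt 𝕜 ∞ u x) :
    (weightedPolyLaplacian (fun j => smoothGermDeriv 𝕜 x (b j)) m (smoothGermOf g hg)
        (smoothGermOf u hu) : Germ (𝓝 x) 𝕜).value =
      ∑ i : Fin m → ι, iteratedFDeriv 𝕜 m
        (fun y => g y * iteratedFDeriv 𝕜 m u y fun k => b (i k)) x fun k => b (i k) := by
  rw [weightedPolyLaplacian, LinearMap.sum_apply, AddSubmonoidClass.coe_finsetSum]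
  refine (map_sum Germ.valueRingHom _ _).trans (Finset.sum_congr rfl fun i _ => ?_)
  have hgu := hg.mul (contDiffAt_iteratedFDeriv_apply hu fun k => b (i k))
  rw [Module.End.mul_apply, Module.End.mul_apply, derivWord_smoothGermOf]
  exact congrArg (fun φ : smoothGerm 𝕜 x => (φ : Germ (𝓝 x) 𝕜).value)
    (derivWord_smoothGermOf b hgu i)

lemma smoothGermDeriv_log {E : Type*} [NormedAddCommGroup E] [NormedSpace ℝ E]
    {x : E} (v : E) {f : E → ℝ} (hf : ContDiffAt ℝ ∞ f x) (hx : f x ≠ 0) :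
    smoothGermDeriv ℝ x v (smoothGermOf (fun y => Real.log (f y)) (hf.log hx)) =
      ((smoothGermUnit f hf hx)⁻¹ : (smoothGerm ℝ x)ˣ) *
        smoothGermDeriv ℝ x v (smoothGermUnit f hf hx : smoothGerm ℝ x) := by
  refine Subtype.ext (Germ.coe_eq.2 ?_)
  filter_upwards [eventually_differentiableAt hf, hf.continuousAt.eventually_ne hx] with y hy hy0
  change fderiv ℝ (fun z => Real.log (f z)) y v = (f y)⁻¹ * fderiv ℝ f y v
  rw [fderiv.log hy hy0]
  rfl

end SmoothGerms

section PuncturedSpace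

variable {E ι : Type*} [NormedAddCommGroup E] [InnerProductSpace ℝ E] [Fintype ι] {x : E}

/-- The coordinates of an orthonormal basis and the norm, on smooth germs at `x ≠ 0`. -/
def puncturedRadialCoordinates [DecidableEq ι] (b : OrthonormalBasis ι ℝ E) (hx : x ≠ 0) :
    RadialCoordinates fun j => smoothGermDeriv ℝ x (b j) where
  commute i j := commute_smoothGermDeriv (b i) (b j)
  coord j := smoothGermOf (innerSL ℝ (b j)) (innerSL ℝ (b j)).contDiff.contDiffAt
  radius := smoothGermUnit norm (contDiffAt_norm ℝ hx) (norm_ne_zero_iff.2 hx)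
  deriv_coord i j := by
    rw [smoothGermDeriv_continuousLinearMap, innerSL_apply_apply, b.inner_eq_ite]
    simp only [eq_comm (a := j), apply_ite (algebraMap ℝ (smoothGerm ℝ x)), map_one, map_zero]
  sum_coord_sq := by
    refine Subtype.ext ?_
    rw [AddSubmonoidClass.coe_finsetSum]
    change ∑ j, ((fun y => inner ℝ (b j) y ^ 2 : E → ℝ) : Germ (𝓝 x) ℝ) = ↑(fun y : E => ‖y‖ ^ 2)
    rw [← Germ.coe_sum]
    congr 1
    ext y
    rw [Finset.sum_apply, b.sum_sq_inner_right]

theorem statement5_general (b : OrthonormalBasis ι ℝ E) {m : ℕ} (hm : 1 ≤ m) (hx : x ≠ 0) :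
    ∑ i : Fin m → ι, iteratedFDeriv ℝ m (fun y => ‖y‖ ^ (2 * m - Fintype.card ι : ℤ) *
      iteratedFDeriv ℝ m (fun z => Real.log ‖z‖) y fun k => b (i k)) x (fun k => b (i k)) = 0 := by
  classical
  have hr := contDiffAt_norm ℝ (n := ∞) hx
  have hr0 := norm_ne_zero_iff.2 hx
  have h := (puncturedRadialCoordinates b hx).weightedPolyLaplacian_log_eq_zero
    (fun j => smoothGermDeriv_log (b j) hr hr0) hm
  rw [show (puncturedRadialCoordinates b hx).radiusPow _ = _ from
    smoothGermUnit_zpow hr hr0 (2 * m - Fintype.card ι)] at h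
  rw [← value_weightedPolyLaplacian_smoothGermOf b m (contDiffAt_zpow hr hr0 _) (hr.log hr0), h]
  rfl

end PuncturedSpace

/-- away from the origin, `log|x|` solves
`∑_{i_1,…,i_N} ∂^N(|x|^N ∂^N log|x|/∂x_{i_1}⋯∂x_{i_N})/∂x_{i_1}⋯∂x_{i_N} = 0` pointwise. -/
theorem statement5 (N : ℕ) (hN : 1 ≤ N)
    (x : EuclideanSpace ℝ (Fin N)) (hx : x ≠ 0) :
    ∑ i : Fin N → Fin N,
      mixedPartial N N (fun y => ‖y‖ ^ N * mixedPartial N N (logNorm N) i y) i x = 0 := by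
  unfold mixedPartial logNorm
  simpa [two_mul] using statement5_general (EuclideanSpace.basisFun (Fin N) ℝ) hN hx
end
end
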